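/- The optimal value of (m-RAOC) equals the optimal value of (m-RAOC-LP). -/

import Mathlib

/-!
The feasible objective values of the two problems form the same set, so the suprema agree.
Substitute `w j S = q j S / (1 + ∑ i ∈ S, v i j)`, and let `x0 j` be the total mass of `w j`,
`x i j` the mass of the sets containing `i`, and `y i i' j` the mass of the sets containing both
`i` and `i'`. Exchanging sums (`sum_mass`, `sum_card_mass`, `sum_rev_mass`) turns the constraints
and the objective of the assortment problem into those of the linear program, with equality.

Conversely, for fixed `x` the program is least constrained when `y i i' j = min (x i j) (x i' j)`.
These largest values are attained by the threshold decomposition (`exists_threshold`): `w j S`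
is the length of the set of `t ∈ (0, x0 j]` with `{i | t ≤ x i j} = S`. These level sets are
nested, so the mass of the sets containing both `i` and `i'` is exactly the minimum of the two individual masses.
-/

open Finset

/-- Expected revenue from customer segment `j` of an assortment under the MNL model. -/
noncomputable def segRev {n m : ℕ} (r : Fin n → ℝ) (v : Fin n → Fin m → ℝ) (j : Fin m)
    (S : Finset (Fin n)) : ℝ :=
  (∑ i ∈ S, r i * v i j) / (1 + ∑ i ∈ S, v i j)

/-- Mass that the weight `w` gives to the sets containing `i`. -/
noncomputable def massOne {n : ℕ} (w : Finset (Fin n) → ℝ) (i : Fin n) : ℝ :=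
  ∑ S : Finset (Fin n), if i ∈ S then w S else 0

/-- Mass that the weight `w` gives to the sets that contain `i` and `i'` together. -/
noncomputable def massTwo {n : ℕ} (w : Finset (Fin n) → ℝ) (i i' : Fin n) : ℝ :=
  ∑ S : Finset (Fin n), if i ∈ S ∧ i' ∈ S then w S else 0

lemma massOne_nonneg {n : ℕ} {w : Finset (Fin n) → ℝ} (hw : ∀ S, 0 ≤ w S) (i : Fin n) :
    0 ≤ massOne w i :=
  Finset.sum_nonneg fun S _ => by split_ifs <;> simp [hw]

lemma massOne_le {n : ℕ} {w : Finset (Fin n) → ℝ} (hw : ∀ S, 0 ≤ w S) (i : Fin n) :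
    massOne w i ≤ ∑ S, w S :=
  Finset.sum_le_sum fun S _ => by split_ifs <;> simp [hw]

lemma massTwo_nonneg {n : ℕ} {w : Finset (Fin n) → ℝ} (hw : ∀ S, 0 ≤ w S) (i i' : Fin n) :
    0 ≤ massTwo w i i' :=
  Finset.sum_nonneg fun S _ => by split_ifs <;> simp [hw]

lemma massTwo_le_left {n : ℕ} {w : Finset (Fin n) → ℝ} (hw : ∀ S, 0 ≤ w S) (i i' : Fin n) :
    massTwo w i i' ≤ massOne w i :=
  Finset.sum_le_sum fun S _ => by
    have := hw S
    by_cases h : i ∈ S <;> by_cases h' : i' ∈ S <;> simp [h, h', this]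

lemma massTwo_le_right {n : ℕ} {w : Finset (Fin n) → ℝ} (hw : ∀ S, 0 ≤ w S) (i i' : Fin n) :
    massTwo w i i' ≤ massOne w i' :=
  Finset.sum_le_sum fun S _ => by
    have := hw S
    by_cases h : i ∈ S <;> by_cases h' : i' ∈ S <;> simp [h, h', this]

lemma sum_mul_massOne {n : ℕ} (w : Finset (Fin n) → ℝ) (a : Fin n → ℝ) :
    ∑ i, a i * massOne w i = ∑ S : Finset (Fin n), w S * ∑ i ∈ S, a i := by
  simp only [massOne, Finset.mul_sum]
  rw [Finset.sum_comm]
  refine Finset.sum_congr rfl fun S _ => ?_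
  rw [← Finset.sum_filter_add_sum_filter_not Finset.univ (fun i => i ∈ S)]
  simp only [Finset.filter_univ_mem]
  rw [Finset.sum_congr rfl (g := fun i => w S * a i)
    (fun i hi => by simp [hi, mul_comm]), add_eq_left]
  exact Finset.sum_eq_zero fun i hi => by simp [(Finset.mem_filter.mp hi).2]

lemma sum_mass {n : ℕ} (w : Finset (Fin n) → ℝ) (a : Fin n → ℝ) :
    ∑ S : Finset (Fin n), w S * (1 + ∑ i ∈ S, a i) = ∑ S, w S + ∑ i, a i * massOne w i := by
  rw [sum_mul_massOne, ← Finset.sum_add_distrib]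
  exact Finset.sum_congr rfl fun S _ => by ring

/-- The visibility of a category `D` under the weights `w S * (1 + ∑ i ∈ S, a i)`. -/
lemma sum_card_mass {n : ℕ} (w : Finset (Fin n) → ℝ) (a : Fin n → ℝ) (D : Finset (Fin n)) :
    ∑ S : Finset (Fin n), ((S ∩ D).card : ℝ) * (w S * (1 + ∑ i ∈ S, a i))
      = ∑ i ∈ D, (massOne w i + ∑ i', a i' * massTwo w i i') := by
  have key : ∀ i, massOne w i + ∑ i', a i' * massTwo w i i'
      = ∑ S : Finset (Fin n), if i ∈ S then w S * (1 + ∑ i ∈ S, a i) else 0 := by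
    intro i
    -- `massTwo w i` is `massOne` of the restriction of `w` to the sets containing `i`.
    have h := sum_mass (fun S => if i ∈ S then w S else 0) a
    have h2 : ∀ i', massTwo w i i' = massOne (fun S => if i ∈ S then w S else 0) i' := by
      intro i'
      refine Finset.sum_congr rfl fun S _ => ?_
      by_cases h : i ∈ S <;> by_cases h' : i' ∈ S <;> simp [h, h']
    simp only [h2]
    rw [massOne, ← h]
    exact Finset.sum_congr rfl fun S _ => by split_ifs <;> simp
  simp only [key]
  rw [Finset.sum_comm]
  refine Finset.sum_congr rfl fun S _ => ?_
  rw [← Finset.sum_filter, Finset.sum_const, nsmul_eq_mul, Finset.filter_mem_eq_inter,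
    Finset.inter_comm]

lemma one_add_sum_pos {n m : ℕ} {v : Fin n → Fin m → ℝ} (hv : ∀ i j, 0 < v i j) (j : Fin m)
    (S : Finset (Fin n)) : 0 < 1 + ∑ i ∈ S, v i j := by
  have := Finset.sum_nonneg (s := S) fun i _ => (hv i j).le
  linarith

lemma sum_rev_mass {n m : ℕ} (r : Fin n → ℝ) {v : Fin n → Fin m → ℝ} (hv : ∀ i j, 0 < v i j)
    (j : Fin m) (w : Finset (Fin n) → ℝ) :
    ∑ S : Finset (Fin n), segRev r v j S * (w S * (1 + ∑ i ∈ S, v i j))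
      = ∑ i, r i * v i j * massOne w i := by
  rw [sum_mul_massOne]
  refine Finset.sum_congr rfl fun S _ => ?_
  have := (one_add_sum_pos hv j S).ne'
  rw [segRev]
  field_simp

open MeasureTheory in
/-- Threshold decomposition: a vector `x` with entries in `[0, c]` is the vector of single masses
of a nonnegative weight of total mass `c` whose pair masses are the minima. The weight of `S` is
the length of the set of `t ∈ (0, c]` with `{i | t ≤ x i} = S`. -/
lemma exists_threshold {n : ℕ} (x : Fin n → ℝ) (c : ℝ) (hc : 0 ≤ c) (h0 : ∀ i, 0 ≤ x i)
    (h1 : ∀ i, x i ≤ c) :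
    ∃ w : Finset (Fin n) → ℝ, (∀ S, 0 ≤ w S) ∧ ∑ S, w S = c ∧ (∀ i, massOne w i = x i) ∧
      ∀ i i', massTwo w i i' = min (x i) (x i') := by
  let f : ℝ → Finset (Fin n) := fun t => Finset.univ.filter fun i => t ≤ x i
  let A : Finset (Fin n) → Set ℝ := fun S => {t | t ∈ Set.Ioc 0 c ∧ f t = S}
  have hA : ∀ S, MeasurableSet (A S) := by
    intro S
    have : A S = Set.Ioc 0 c ∩ ⋂ i, {t | t ≤ x i ↔ i ∈ S} := by
      ext t
      simp [A, f, Finset.ext_iff]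
    rw [this]
    refine measurableSet_Ioc.inter (MeasurableSet.iInter fun i => ?_)
    by_cases h : i ∈ S
    · have : {t | t ≤ x i ↔ i ∈ S} = Set.Iic (x i) := by ext t; simp [h]
      rw [this]
      exact measurableSet_Iic
    · have : {t | t ≤ x i ↔ i ∈ S} = Set.Ioi (x i) := by ext t; simp [h]
      rw [this]
      exact measurableSet_Ioi
  have hsum : ∀ P : Finset (Finset (Fin n)),
      ∑ S ∈ P, volume.real (A S) = volume.real {t | t ∈ Set.Ioc 0 c ∧ f t ∈ P} := by
    intro P
    rw [← measureReal_biUnion_finset (fun S _ T _ hST => ?_) (fun S _ => hA S) (fun S _ => ?_)]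
    · congr 1
      ext t
      simp [A]
    · exact Set.disjoint_left.mpr fun t h h' => hST (h.2.symm.trans h'.2)
    · exact ((measure_mono fun t ht => ht.1).trans_lt
        (measure_Ioc_lt_top (μ := volume) (a := (0 : ℝ)) (b := c))).ne
  refine ⟨fun S => volume.real (A S), fun S => measureReal_nonneg, ?_, fun i => ?_,
    fun i i' => ?_⟩
  · rw [hsum]
    simp [Set.Ioc_def, hc]
  · rw [massOne, ← Finset.sum_filter, hsum]
    have : {t | t ∈ Set.Ioc 0 c ∧ f t ∈ Finset.univ.filter fun S => i ∈ S} = Set.Ioc 0 (x i) := by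
      ext t
      have := h1 i
      simp only [f, Set.mem_ofPred_eq, Set.mem_Ioc, Finset.mem_filter, Finset.mem_univ, true_and]
      constructor
      · rintro ⟨⟨a, b⟩, d⟩; exact ⟨a, d⟩
      · rintro ⟨a, d⟩; exact ⟨⟨a, d.trans this⟩, d⟩
    rw [this, Real.volume_real_Ioc_of_le (h0 i), sub_zero]
  · rw [massTwo, ← Finset.sum_filter, hsum]
    have : {t | t ∈ Set.Ioc 0 c ∧ f t ∈ Finset.univ.filter fun S => i ∈ S ∧ i' ∈ S}
        = Set.Ioc 0 (min (x i) (x i')) := by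
      ext t
      have := h1 i
      simp only [f, Set.mem_ofPred_eq, Set.mem_Ioc, Finset.mem_filter, Finset.mem_univ, true_and,
        le_min_iff]
      constructor
      · rintro ⟨⟨a, b⟩, d⟩; exact ⟨a, d⟩
      · rintro ⟨a, d⟩; exact ⟨⟨a, d.1.trans this⟩, d⟩
    rw [this, Real.volume_real_Ioc_of_le (le_min (h0 i) (h0 i')), sub_zero]

theorem stmt11 {n m K : ℕ}
    (r : Fin n → ℝ) (hr : ∀ i, 0 ≤ r i)
    (v : Fin n → Fin m → ℝ) (hv : ∀ i j, 0 < v i j)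
    (θ : Fin m → ℝ) (hθ : ∀ j, 0 < θ j) (hθ1 : ∑ j, θ j = 1)
    (C : Fin K → Finset (Fin n)) (ℓ : Fin K → ℕ) (hℓ : ∀ k, ℓ k ≤ (C k).card) :
    -- optimal value of (m-RAOC)
    sSup {z : ℝ | ∃ q : Fin m → Finset (Fin n) → ℝ,
        (∀ j S, 0 ≤ q j S) ∧
        (∀ j, ∑ S : Finset (Fin n), q j S = 1) ∧
        (∀ k, (ℓ k : ℝ) ≤ ∑ j, ∑ S : Finset (Fin n), θ j * ((S ∩ C k).card : ℝ) * q j S) ∧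
        z = ∑ j, ∑ S : Finset (Fin n), θ j * segRev r v j S * q j S}
    -- equals the optimal value of (m-RAOC-LP)
    = sSup {z : ℝ | ∃ (x0 : Fin m → ℝ) (x : Fin n → Fin m → ℝ)
          (y : Fin n → Fin n → Fin m → ℝ),
        (∀ j, x0 j + ∑ i, v i j * x i j = 1) ∧
        (∀ i j, 0 ≤ x i j) ∧ (∀ i j, x i j ≤ x0 j) ∧
        (∀ i i' j, 0 ≤ y i i' j) ∧ (∀ i i' j, y i i' j ≤ x i j) ∧
        (∀ i i' j, y i i' j ≤ x i' j) ∧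
        (∀ k, (ℓ k : ℝ) ≤ ∑ i ∈ C k, ∑ j, θ j * (x i j + ∑ i', v i' j * y i i' j)) ∧
        z = ∑ j, ∑ i, θ j * r i * v i j * x i j} := by
  -- The visibility and the revenue of `q j S = w j S * (1 + ∑ i ∈ S, v i j)` in terms of masses.
  have hcard : ∀ (w : Fin m → Finset (Fin n) → ℝ) (D : Finset (Fin n)),
      ∑ j, ∑ S : Finset (Fin n), θ j * ((S ∩ D).card : ℝ) * (w j S * (1 + ∑ i ∈ S, v i j))
        = ∑ i ∈ D, ∑ j, θ j * (massOne (w j) i + ∑ i', v i' j * massTwo (w j) i i') := by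
    intro w D
    rw [Finset.sum_comm (s := D)]
    refine Finset.sum_congr rfl fun j _ => ?_
    simp only [mul_assoc (θ j)]
    rw [← Finset.mul_sum, ← Finset.mul_sum, sum_card_mass]
  have hrev : ∀ w : Fin m → Finset (Fin n) → ℝ,
      ∑ j, ∑ S : Finset (Fin n), θ j * segRev r v j S * (w j S * (1 + ∑ i ∈ S, v i j))
        = ∑ j, ∑ i, θ j * r i * v i j * massOne (w j) i := by
    intro w
    refine Finset.sum_congr rfl fun j _ => ?_
    simp only [mul_assoc (θ j)]
    rw [← Finset.mul_sum, ← Finset.mul_sum, sum_rev_mass r hv]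
  congr 1
  ext z
  simp only [Set.mem_ofPred_eq]
  constructor
  · rintro ⟨q, hq0, hq1, hqC, rfl⟩
    obtain ⟨w, hw⟩ : ∃ w : Fin m → Finset (Fin n) → ℝ,
        ∀ j S, q j S = w j S * (1 + ∑ i ∈ S, v i j) :=
      ⟨fun j S => q j S / (1 + ∑ i ∈ S, v i j), fun j S =>
        (div_mul_cancel₀ _ (one_add_sum_pos hv j S).ne').symm⟩
    have hw0 : ∀ j S, 0 ≤ w j S := fun j S =>
      nonneg_of_mul_nonneg_left (hw j S ▸ hq0 j S) (one_add_sum_pos hv j S)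
    simp only [hw] at hq1 hqC ⊢
    refine ⟨fun j => ∑ S, w j S, fun i j => massOne (w j) i, fun i i' j => massTwo (w j) i i',
      fun j => ?_, fun i j => massOne_nonneg (hw0 j) i, fun i j => massOne_le (hw0 j) i,
      fun i i' j => massTwo_nonneg (hw0 j) i i', fun i i' j => massTwo_le_left (hw0 j) i i',
      fun i i' j => massTwo_le_right (hw0 j) i i', fun k => ?_, hrev w⟩
    · rw [← sum_mass, hq1]
    · rw [← hcard]
      exact hqC k
  · rintro ⟨x0, x, y, hx, hx0, hxx0, hy0, hyl, hyr, hC, rfl⟩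
    -- If there are no products, `x0 j = 1`; otherwise `0 ≤ x i j ≤ x0 j` for some `i`.
    have hc : ∀ j, 0 ≤ x0 j := by
      intro j
      rcases isEmpty_or_nonempty (Fin n) with h | ⟨⟨i⟩⟩
      · have := hx j
        simp only [Finset.univ_eq_empty, Finset.sum_empty] at this
        linarith
      · exact (hx0 i j).trans (hxx0 i j)
    choose w hw0 hw1 hwx hwy using fun j =>
      exists_threshold (fun i => x i j) (x0 j) (hc j) (fun i => hx0 i j) (fun i => hxx0 i j)
    refine ⟨fun j S => w j S * (1 + ∑ i ∈ S, v i j),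
      fun j S => mul_nonneg (hw0 j S) (one_add_sum_pos hv j S).le, fun j => ?_, fun k => ?_, ?_⟩
    · rw [sum_mass, hw1]
      simp only [hwx]
      exact hx j
    · rw [hcard]
      refine (hC k).trans (Finset.sum_le_sum fun i _ => Finset.sum_le_sum fun j _ => ?_)
      rw [hwx]
      refine mul_le_mul_of_nonneg_left (add_le_add le_rfl
        (Finset.sum_le_sum fun i' _ => ?_)) (hθ j).le
      rw [hwy]
      exact mul_le_mul_of_nonneg_left (le_min (hyl i i' j) (hyr i i' j)) (hv i' j).le
    · rw [hrev]
      simp only [hwx]
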